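/- arXiv:1904.02702 — 4 statements merged into one kernel-verified Lean document; each statement's English description precedes it below -/
import Mathlib

section
/- Let G, G_{v1}, G_{v2} : [0,T] → Mₙ(ℂ) be continuous and let U be the propagator of G, i.e., U(0) = I, U'(t) = G(t)·U(t) for all t ∈ [0,T], and U(t) invertible for every t. Write G̃_{vi}(s) = U(s)⁻¹·G_{vi}(s)·U(s) for i = 1,2, define W_i(t) = U(t)·∫₀ᵗ G̃_{vi}(s) ds, and define Y(t) = U(t)·∫₀ᵗ dt₁ ∫₀^{t₁} dt₂ (G̃_{v1}(t₁)·G̃_{v2}(t₂) + G̃_{v2}(t₁)·G̃_{v1}(t₂)). Then Y(0) = 0 and Y'(t) = G(t)·Y(t) + G_{v1}(t)·W₂(t) + G_{v2}(t)·W₁(t) for all t ∈ [0,T]. -/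
/-!
Duhamel's formula: if `U' = G U` with `U` invertible, then `Z t = U t ∫ U⁻¹ F` solves the
inhomogeneous equation `Z' = G Z + F` with `Z = 0` at the initial time. By associativity,
`G̃ᵥᵢ ∫ G̃ᵥⱼ = U⁻¹ Gᵥᵢ (U ∫ G̃ᵥⱼ) = U⁻¹ Gᵥᵢ Wⱼ`, so `Y` is the Duhamel integral of the source
`Gᵥ₁ W₂ + Gᵥ₂ W₁`. Each `Wᵢ` is itself the Duhamel integral of `Gᵥᵢ U`, hence continuous, and
Duhamel's formula applies to `Y`.
-/

open MeasureTheory Set intervalIntegral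

attribute [local instance] Matrix.linftyOpNormedAddCommGroup Matrix.linftyOpNormedRing
  Matrix.linftyOpNormedAlgebra

theorem hasDerivWithinAt_integral_of_continuousOn_Icc {E : Type*} [NormedAddCommGroup E]
    [NormedSpace ℝ E] [CompleteSpace E] {f : ℝ → E} {a b t₀ t : ℝ}
    (hf : ContinuousOn f (Icc a b)) (ht₀ : t₀ ∈ Icc a b) (ht : t ∈ Icc a b) :
    HasDerivWithinAt (fun u => ∫ s in t₀..u, f s) (f t) (Icc a b) t := by
  -- the `FTCFilter` instance for `Icc a b` is found through this `Fact`
  have : Fact (t ∈ Icc a b) := ⟨ht⟩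
  exact integral_hasDerivWithinAt_right
    (hf.mono (uIcc_subset_Icc ht₀ ht)).intervalIntegrable
    (hf.stronglyMeasurableAtFilter_nhdsWithin measurableSet_Icc t) (hf t ht)

section Duhamel

open scoped Ring

theorem continuousOn_ringInverse_comp {X A : Type*} [TopologicalSpace X] [NormedRing A]
    [HasSummableGeomSeries A] {U : X → A} {S : Set X} (hU : ContinuousOn U S)
    (hUinv : ∀ x ∈ S, IsUnit (U x)) : ContinuousOn (fun x => (U x)⁻¹ʳ) S := by
  intro x hx
  obtain ⟨u, hu⟩ := hUinv x hx
  have h_inverse : ContinuousAt Ring.inverse (U x) := hu ▸ NormedRing.inverse_continuousAt u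
  exact h_inverse.comp_continuousWithinAt (hU x hx)

variable {A : Type*} [NormedRing A] [NormedAlgebra ℝ A]

/-- The Duhamel (variation-of-constants) integral `U t ∫ U⁻¹ F` over `[t₀, t]`: the response at
time `t` of a linear system with fundamental solution `U` to the source `F` switched on at `t₀`.
The inverse is `Ring.inverse`, so the integrand vanishes wherever `U` is not invertible. -/
noncomputable def duhamelIntegral (U F : ℝ → A) (t₀ t : ℝ) : A :=
  U t * ∫ s in t₀..t, (U s)⁻¹ʳ * F s

theorem duhamelIntegral_self (U F : ℝ → A) (t₀ : ℝ) : duhamelIntegral U F t₀ t₀ = 0 := by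
  rw [duhamelIntegral, integral_same, mul_zero]

variable [CompleteSpace A] {U F : ℝ → A} {a b t₀ : ℝ}

theorem hasDerivWithinAt_duhamelIntegral {g : A} {t : ℝ} (hU_cont : ContinuousOn U (Icc a b))
    (hUinv : ∀ s ∈ Icc a b, IsUnit (U s)) (hF : ContinuousOn F (Icc a b))
    (ht₀ : t₀ ∈ Icc a b) (ht : t ∈ Icc a b) (hU : HasDerivWithinAt U (g * U t) (Icc a b) t) :
    HasDerivWithinAt (duhamelIntegral U F t₀) (g * duhamelIntegral U F t₀ t + F t)
      (Icc a b) t := by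
  have h_integral : HasDerivWithinAt (fun u => ∫ s in t₀..u, (U s)⁻¹ʳ * F s)
      ((U t)⁻¹ʳ * F t) (Icc a b) t :=
    hasDerivWithinAt_integral_of_continuousOn_Icc
      ((continuousOn_ringInverse_comp hU_cont hUinv).mul hF) ht₀ ht
  refine (hU.mul h_integral).congr_deriv ?_
  rw [Ring.mul_inverse_cancel_left _ _ (hUinv t ht), mul_assoc, duhamelIntegral]

theorem continuousOn_duhamelIntegral (hU : ContinuousOn U (Icc a b))
    (hUinv : ∀ t ∈ Icc a b, IsUnit (U t)) (hF : ContinuousOn F (Icc a b))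
    (ht₀ : t₀ ∈ Icc a b) : ContinuousOn (duhamelIntegral U F t₀) (Icc a b) :=
  hU.mul fun _ ht => (hasDerivWithinAt_integral_of_continuousOn_Icc
    ((continuousOn_ringInverse_comp hU hUinv).mul hF) ht₀ ht).continuousWithinAt

theorem statement3_general {G V₁ V₂ W₁ W₂ Y : ℝ → A} (ht₀ : t₀ ∈ Icc a b)
    (hV₁ : ContinuousOn V₁ (Icc a b)) (hV₂ : ContinuousOn V₂ (Icc a b))
    (hU : ∀ t ∈ Icc a b, HasDerivWithinAt U (G t * U t) (Icc a b) t)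
    (hUinv : ∀ t ∈ Icc a b, IsUnit (U t))
    (hW₁ : W₁ = fun t => U t * ∫ s in t₀..t, (U s)⁻¹ʳ * V₁ s * U s)
    (hW₂ : W₂ = fun t => U t * ∫ s in t₀..t, (U s)⁻¹ʳ * V₂ s * U s)
    (hY : Y = fun t => U t * ∫ t₁ in t₀..t,
      (((U t₁)⁻¹ʳ * V₁ t₁ * U t₁) * ∫ t₂ in t₀..t₁, (U t₂)⁻¹ʳ * V₂ t₂ * U t₂)
      + ((U t₁)⁻¹ʳ * V₂ t₁ * U t₁) * ∫ t₂ in t₀..t₁, (U t₂)⁻¹ʳ * V₁ t₂ * U t₂) :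
    Y t₀ = 0 ∧
    ∀ t ∈ Icc a b, HasDerivWithinAt Y (G t * Y t + V₁ t * W₂ t + V₂ t * W₁ t) (Icc a b) t := by
  have hY_duhamel : Y = duhamelIntegral U (fun s => V₁ s * W₂ s + V₂ s * W₁ s) t₀ := by
    funext t
    simp only [hY, hW₁, hW₂, duhamelIntegral, mul_add, mul_assoc]
  have hU_cont : ContinuousOn U (Icc a b) := fun t ht => (hU t ht).continuousWithinAt
  have hW_cont {V : ℝ → A} (hV : ContinuousOn V (Icc a b)) :
      ContinuousOn (fun t => U t * ∫ s in t₀..t, (U s)⁻¹ʳ * V s * U s) (Icc a b) := by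
    simp only [mul_assoc]
    exact continuousOn_duhamelIntegral hU_cont hUinv (hV.mul hU_cont) ht₀
  have h_source : ContinuousOn (fun s => V₁ s * W₂ s + V₂ s * W₁ s) (Icc a b) :=
    (hV₁.mul (hW₂ ▸ hW_cont hV₂)).add (hV₂.mul (hW₁ ▸ hW_cont hV₁))
  rw [hY_duhamel]
  refine ⟨duhamelIntegral_self .., fun t ht => ?_⟩
  rw [add_assoc]
  exact hasDerivWithinAt_duhamelIntegral hU_cont hUinv h_source ht₀ ht (hU t ht)

end Duhamel

/-- With `U` the propagator of `G`, `G̃ᵥᵢ s = U s⁻¹ Gᵥᵢ s U s`,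
`Wᵢ t = U t ∫₀ᵗ G̃ᵥᵢ`, and the symmetrized second-order Dyson term
`Y t = U t ∫₀ᵗ dt₁ ∫₀^{t₁} dt₂ (G̃ᵥ₁(t₁) G̃ᵥ₂(t₂) + G̃ᵥ₂(t₁) G̃ᵥ₁(t₂))`, one has `Y 0 = 0` and
`Y' = G Y + Gᵥ₁ W₂ + Gᵥ₂ W₁`. -/
theorem statement3 {n : ℕ} {T : ℝ} (hT : 0 < T)
    (G Gv1 Gv2 U W1 W2 Y : ℝ → Matrix (Fin n) (Fin n) ℂ)
    (hG : ContinuousOn G (Icc 0 T))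
    (hGv1 : ContinuousOn Gv1 (Icc 0 T)) (hGv2 : ContinuousOn Gv2 (Icc 0 T))
    (hU0 : U 0 = 1)
    (hU : ∀ t ∈ Icc (0 : ℝ) T, HasDerivWithinAt U (G t * U t) (Icc 0 T) t)
    (hUinv : ∀ t ∈ Icc (0 : ℝ) T, IsUnit (U t))
    (hW1 : W1 = fun t => U t * ∫ s in (0 : ℝ)..t, (U s)⁻¹ * Gv1 s * U s)
    (hW2 : W2 = fun t => U t * ∫ s in (0 : ℝ)..t, (U s)⁻¹ * Gv2 s * U s)
    (hY : Y = fun t => U t * ∫ t₁ in (0 : ℝ)..t,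
      (((U t₁)⁻¹ * Gv1 t₁ * U t₁) * ∫ t₂ in (0 : ℝ)..t₁, (U t₂)⁻¹ * Gv2 t₂ * U t₂)
      + ((U t₁)⁻¹ * Gv2 t₁ * U t₁) * ∫ t₂ in (0 : ℝ)..t₁, (U t₂)⁻¹ * Gv1 t₂ * U t₂) :
    Y 0 = 0 ∧
    ∀ t ∈ Icc (0 : ℝ) T,
      HasDerivWithinAt Y (G t * Y t + Gv1 t * W2 t + Gv2 t * W1 t) (Icc 0 T) t := by
  simp only [Matrix.nonsing_inv_eq_ringInverse] at hW1 hW2 hY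
  exact statement3_general (left_mem_Icc.2 hT.le) hGv1 hGv2 hU hUinv hW1 hW2 hY
end

section
/- Let B_{i,j} : [0,T] → Mₙ(ℂ) be continuous for 1 ≤ i ≤ j ≤ m; for each i let U_i satisfy U_i(0) = I, U_i'(t) = B_{i,i}(t)·U_i(t), with U_i(t) invertible for every t. Suppose C_{i,j} : [0,T] → Mₙ(ℂ) satisfy C_{s,s+j}'(t) = Σ_{i=0}^{j} B_{s,s+i}(t)·C_{s+i,s+j}(t) with C_{s,s}(0) = I and C_{s,s+j}(0) = 0 for j ≥ 1. Then for all 1 ≤ s ≤ m and 1 ≤ j ≤ m−s and all t ∈ [0,T], C_{s,s+j}(t) = Int_{(s,s+j)}(t) + Σ_{i=1}^{j−1} U_s(t)·∫₀ᵗ U_s(t₁)⁻¹·B_{s,s+i}(t₁)·C_{s+i,s+j}(t₁) dt₁, where Int_{(s,s+j)}(t) = U_s(t)·∫₀ᵗ U_s(t₁)⁻¹·B_{s,s+j}(t₁)·U_{s+j}(t₁) dt₁. -/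
open MeasureTheory Set intervalIntegral

attribute [local instance] Matrix.linftyOpNormedAddCommGroup Matrix.linftyOpNormedRing
  Matrix.linftyOpNormedAlgebra

/-!
If `U' = A U` with `U` invertible and `X' = A X + F`, then `(U⁻¹ X)' = U⁻¹ F`, so integrating
expresses `X` through `U` and `F`. For the block `C p q`, the forcing term collects the blocks
`B p k * C k q` with `p < k ≤ q`. Its `k = q` term contains the diagonal block `C q q`, which
equals `U q` because both solve `Y' = B q q * Y` with the same initial value.
-/

open scoped Ring

section Inverse

variable {R : Type*} [NormedRing R] [HasSummableGeomSeries R]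

theorem hasDerivWithinAt_ringInverse {𝕜 : Type*} [NontriviallyNormedField 𝕜] [NormedAlgebra 𝕜 R]
    {U : 𝕜 → R} {U' : R} {s : Set 𝕜} {t : 𝕜}
    (hU : HasDerivWithinAt U U' s t) (hUt : IsUnit (U t)) :
    HasDerivWithinAt (fun τ => (U τ)⁻¹ʳ) (-((U t)⁻¹ʳ * U' * (U t)⁻¹ʳ)) s t := by
  obtain ⟨u, hu⟩ := hUt
  have hinv := hasFDerivAt_ringInverse (𝕜 := 𝕜) u
  rw [← Ring.inverse_unit, hu] at hinv
  exact hinv.comp_hasDerivWithinAt t hU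

theorem hasDerivWithinAt_ringInverse_mul {𝕜 : Type*} [NontriviallyNormedField 𝕜]
    [NormedAlgebra 𝕜 R] {U X : 𝕜 → R} {A F : R} {s : Set 𝕜} {t : 𝕜}
    (hU : HasDerivWithinAt U (A * U t) s t) (hUt : IsUnit (U t))
    (hX : HasDerivWithinAt X (A * X t + F) s t) :
    HasDerivWithinAt (fun τ => (U τ)⁻¹ʳ * X τ) ((U t)⁻¹ʳ * F) s t := by
  have hinv : HasDerivWithinAt (fun τ => (U τ)⁻¹ʳ) (-((U t)⁻¹ʳ * A)) s t := by
    simpa only [mul_assoc, Ring.mul_inverse_cancel _ hUt, mul_one] using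
      hasDerivWithinAt_ringInverse hU hUt
  convert hinv.fun_mul hX using 1
  noncomm_ring

theorem continuousOn_ringInverse {α : Type*} [TopologicalSpace α] {U : α → R} {s : Set α}
    (hU : ContinuousOn U s) (hUinv : ∀ t ∈ s, IsUnit (U t)) :
    ContinuousOn (fun t => (U t)⁻¹ʳ) s := fun t ht => by
  obtain ⟨u, hu⟩ := hUinv t ht
  exact (hu ▸ NormedRing.inverse_continuousAt u).comp_continuousWithinAt (hU t ht)

theorem intervalIntegrable_ringInverse_mul {U F : ℝ → R} {a b t : ℝ}
    (hU : ContinuousOn U (Icc a b)) (hUinv : ∀ t ∈ Icc a b, IsUnit (U t))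
    (hF : IntegrableOn F (Icc a b)) (ht : t ∈ Icc a b) :
    IntervalIntegrable (fun τ => (U τ)⁻¹ʳ * F τ) volume a t := by
  have hint := hF.continuousOn_mul (continuousOn_ringInverse hU hUinv) isCompact_Icc
  rw [intervalIntegrable_iff_integrableOn_Icc_of_le ht.1]
  exact hint.mono_set (Icc_subset_Icc_right ht.2)

end Inverse

section VariationOfConstants

variable {R : Type*} [NormedRing R] [NormedAlgebra ℝ R] [CompleteSpace R]
  {U X A : ℝ → R} {a b t : ℝ}

theorem variation_of_constants {F : ℝ → R}
    (hU : ∀ t ∈ Icc a b, HasDerivWithinAt U (A t * U t) (Icc a b) t)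
    (hUinv : ∀ t ∈ Icc a b, IsUnit (U t))
    (hX : ∀ t ∈ Icc a b, HasDerivWithinAt X (A t * X t + F t) (Icc a b) t)
    (hF : IntegrableOn F (Icc a b)) (ht : t ∈ Icc a b) :
    X t = U t * ((U a)⁻¹ʳ * X a + ∫ τ in a..t, (U τ)⁻¹ʳ * F τ) := by
  have hderiv : ∀ s ∈ Icc a b,
      HasDerivWithinAt (fun τ => (U τ)⁻¹ʳ * X τ) ((U s)⁻¹ʳ * F s) (Icc a b) s :=
    fun s hs => hasDerivWithinAt_ringInverse_mul (hU s hs) (hUinv s hs) (hX s hs)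
  have hsub : Icc a t ⊆ Icc a b := Icc_subset_Icc_right ht.2
  have hftc : ∫ τ in a..t, (U τ)⁻¹ʳ * F τ = (U t)⁻¹ʳ * X t - (U a)⁻¹ʳ * X a :=
    integral_eq_sub_of_hasDerivAt_of_le ht.1
      (fun s hs => (hderiv s (hsub hs)).continuousWithinAt.mono hsub)
      (fun s hs => (hderiv s (hsub (Ioo_subset_Icc_self hs))).hasDerivAt
        (Icc_mem_nhds hs.1 (hs.2.trans_le ht.2)))
      (intervalIntegrable_ringInverse_mul (fun s hs => (hU s hs).continuousWithinAt) hUinv hF ht)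
  rw [hftc, add_sub_cancel, Ring.mul_inverse_cancel_left _ _ (hUinv t ht)]

theorem eqOn_of_hasDerivWithinAt_mul
    (hU : ∀ t ∈ Icc a b, HasDerivWithinAt U (A t * U t) (Icc a b) t)
    (hUinv : ∀ t ∈ Icc a b, IsUnit (U t))
    (hX : ∀ t ∈ Icc a b, HasDerivWithinAt X (A t * X t) (Icc a b) t) (hXa : X a = U a) :
    EqOn X U (Icc a b) := fun t ht => by
  have hUa : IsUnit (U a) := hUinv a (left_mem_Icc.2 (ht.1.trans ht.2))
  have hX_zero : ∀ s ∈ Icc a b, HasDerivWithinAt X (A s * X s + 0) (Icc a b) s := by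
    simpa only [add_zero] using hX
  rw [variation_of_constants hU hUinv hX_zero integrableOn_zero ht, hXa,
    Ring.inverse_mul_cancel _ hUa]
  simp

theorem eq_sum_of_hasDerivWithinAt_mul_add_sum {ι : Type*} {s : Finset ι} {F : ι → ℝ → R}
    (hU : ∀ t ∈ Icc a b, HasDerivWithinAt U (A t * U t) (Icc a b) t)
    (hUinv : ∀ t ∈ Icc a b, IsUnit (U t))
    (hX : ∀ t ∈ Icc a b, HasDerivWithinAt X (A t * X t + ∑ k ∈ s, F k t) (Icc a b) t)
    (hXa : X a = 0) (hF : ∀ k ∈ s, IntegrableOn (F k) (Icc a b)) (ht : t ∈ Icc a b) :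
    X t = ∑ k ∈ s, U t * ∫ τ in a..t, (U τ)⁻¹ʳ * F k τ := by
  have hUc : ContinuousOn U (Icc a b) := fun τ hτ => (hU τ hτ).continuousWithinAt
  rw [variation_of_constants hU hUinv hX (integrable_finsetSum s hF) ht, hXa, mul_zero, zero_add,
    ← Finset.mul_sum, ← intervalIntegral.integral_finsetSum fun k hk =>
      intervalIntegrable_ringInverse_mul hUc hUinv (hF k hk) ht]
  simp only [Finset.mul_sum]

end VariationOfConstants

theorem statement8_general {ι R : Type*} [PartialOrder ι] [LocallyFiniteOrder ι]
    [NormedRing R] [NormedAlgebra ℝ R] [CompleteSpace R] {a b : ℝ}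
    (B C : ι → ι → ℝ → R) (U : ι → ℝ → R)
    (hB : ∀ i j, i < j → IntegrableOn (B i j) (Icc a b))
    (hU : ∀ i, ∀ t ∈ Icc a b, HasDerivWithinAt (U i) (B i i t * U i t) (Icc a b) t)
    (hUinv : ∀ i, ∀ t ∈ Icc a b, IsUnit (U i t))
    (hCdiag : ∀ i, C i i a = U i a)
    (hC : ∀ i j, i < j → C i j a = 0)
    (hCsys : ∀ i j, i ≤ j → ∀ t ∈ Icc a b,
      HasDerivWithinAt (C i j) (∑ k ∈ Finset.Icc i j, B i k t * C k j t) (Icc a b) t)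
    (p q : ι) (hpq : p < q) (t : ℝ) (ht : t ∈ Icc a b) :
    C p q t =
      U p t * (∫ τ in a..t, (U p τ)⁻¹ʳ * B p q τ * U q τ) +
      ∑ k ∈ Finset.Ioo p q, U p t * ∫ τ in a..t, (U p τ)⁻¹ʳ * B p k τ * C k q τ := by
  have hdiag : EqOn (C q q) (U q) (Icc a b) :=
    eqOn_of_hasDerivWithinAt_mul (hU q) (hUinv q) (by simpa using hCsys q q le_rfl) (hCdiag q)
  have hsys : ∀ s ∈ Icc a b, HasDerivWithinAt (C p q)
      (B p p s * C p q s + ∑ k ∈ Finset.Ioc p q, B p k s * C k q s) (Icc a b) s := fun s hs => by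
    simpa only [← Finset.add_sum_Ioc_eq_sum_Icc hpq.le] using hCsys p q hpq.le s hs
  have hint : ∀ k ∈ Finset.Ioc p q, IntegrableOn (fun s => B p k s * C k q s) (Icc a b) := by
    intro k hk
    obtain ⟨hpk, hkq⟩ := Finset.mem_Ioc.1 hk
    exact (hB p k hpk).mul_continuousOn
      (fun s hs => (hCsys k q hkq s hs).continuousWithinAt) isCompact_Icc
  have hdiag_integral : ∫ τ in a..t, (U p τ)⁻¹ʳ * B p q τ * C q q τ =
      ∫ τ in a..t, (U p τ)⁻¹ʳ * B p q τ * U q τ := by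
    refine intervalIntegral.integral_congr fun τ hτ => ?_
    rw [uIcc_of_le ht.1] at hτ
    exact congrArg _ (hdiag (Icc_subset_Icc_right ht.2 hτ))
  rw [eq_sum_of_hasDerivWithinAt_mul_add_sum (hU p) (hUinv p) hsys (hC p q hpq) hint ht,
    ← Finset.add_sum_Ioo_eq_sum_Ioc hpq]
  simp only [← mul_assoc (_⁻¹ʳ), hdiag_integral]

/-- recursive form of Theorem 1. If the blocks `C i j` solve the coupled
block system of the upper-triangular IVP, with `U i` the (invertible) propagator of `B i i`,
then for `p < q`,
`C p q t = U p t ∫₀ᵗ (U p)⁻¹ B p q U q + ∑_{p < k < q} U p t ∫₀ᵗ (U p)⁻¹ B p k (C k q)`. -/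
theorem statement8 {m n : ℕ} {T : ℝ} (hT : 0 < T)
    (B C : Fin m → Fin m → ℝ → Matrix (Fin n) (Fin n) ℂ)
    (U : Fin m → ℝ → Matrix (Fin n) (Fin n) ℂ)
    (hB : ∀ i j : Fin m, i ≤ j → ContinuousOn (B i j) (Icc 0 T))
    (hU0 : ∀ i, U i 0 = 1)
    (hU : ∀ i, ∀ t ∈ Icc (0 : ℝ) T,
      HasDerivWithinAt (U i) (B i i t * U i t) (Icc 0 T) t)
    (hUinv : ∀ i, ∀ t ∈ Icc (0 : ℝ) T, IsUnit (U i t))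
    (hC0diag : ∀ i : Fin m, C i i 0 = 1)
    (hC0 : ∀ i j : Fin m, i < j → C i j 0 = 0)
    (hCsys : ∀ i j : Fin m, i ≤ j → ∀ t ∈ Icc (0 : ℝ) T,
      HasDerivWithinAt (C i j) (∑ k ∈ Finset.Icc i j, B i k t * C k j t) (Icc 0 T) t) :
    ∀ p q : Fin m, p < q → ∀ t ∈ Icc (0 : ℝ) T,
      C p q t =
        U p t * (∫ τ in (0 : ℝ)..t, (U p τ)⁻¹ * B p q τ * U q τ) +
        ∑ k ∈ Finset.Ioo p q,
          U p t * ∫ τ in (0 : ℝ)..t, (U p τ)⁻¹ * B p k τ * C k q τ := by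
  have : CompleteSpace (Matrix (Fin n) (Fin n) ℂ) := FiniteDimensional.complete ℂ _
  simpa only [Matrix.nonsing_inv_eq_ringInverse] using statement8_general B C U
    (fun i j hij => (hB i j hij.le).integrableOn_Icc) hU hUinv
    (fun i => (hC0diag i).trans (hU0 i).symm) hC0 hCsys
end

section
/- Let B_{i,j} : [0,T] → Mₙ(ℂ) be continuous for 1 ≤ i ≤ j ≤ m; for each i let U_i satisfy U_i(0) = I, U_i'(t) = B_{i,i}(t)·U_i(t), with U_i(t) invertible for every t, and define Int_{(i₁,…,i_s)} as the nested integral Int_{(i₁,…,i_s)}(t) = U_{i₁}(t)·∫₀ᵗ dt₁ ⋯ ∫₀^{t_{s−2}} dt_{s−1} U_{i₁}(t₁)⁻¹B_{i₁,i₂}(t₁)U_{i₂}(t₁) ⋯ U_{i_{s−1}}(t_{s−1})⁻¹B_{i_{s−1},i_s}(t_{s−1})U_{i_s}(t_{s−1}), with Int_{(i)}(t) = U_i(t). For each pair (p, p+q) define C_{p,p+q}(t) = Int_{(p,p+q)}(t) + Σ_{r=1}^{q−1} Σ_{p < i₁ < ⋯ < i_r < p+q} Int_{(p,i₁,…,i_r,p+q)}(t)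 for q ≥ 1. Then for all 1 ≤ s ≤ m and all j ≥ 2 with s + j ≤ m, the identity Σ_{r=1}^{j−1} Σ_{s < i₁ < ⋯ < i_r < s+j} Int_{(s,i₁,…,i_r,s+j)}(t) = Σ_{i=1}^{j−1} U_s(t)·∫₀ᵗ U_s(t₁)⁻¹·B_{s,s+i}(t₁)·C_{s+i,s+j}(t₁) dt₁ holds for all t ∈ [0,T]. -/
open MeasureTheory Set intervalIntegral

attribute [local instance] Matrix.linftyOpNormedAddCommGroup Matrix.linftyOpNormedRing
  Matrix.linftyOpNormedAlgebra

/-- The iterated (time-ordered simplex) integral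
`nestedInt [M₁, …, M_k] t = ∫₀ᵗ dt₁ M₁(t₁) ∫₀^{t₁} dt₂ M₂(t₂) ⋯ ∫₀^{t_{k-1}} dt_k M_k(t_k)`. -/
noncomputable def nestedInt {n : ℕ} :
    List (ℝ → Matrix (Fin n) (Fin n) ℂ) → ℝ → Matrix (Fin n) (Fin n) ℂ
  | [] => fun _ => 1
  | M :: Ms => fun t => ∫ τ in (0 : ℝ)..t, M τ * nestedInt Ms τ

/-- `intTuple B U [i₁, …, i_s] t` is the nested integral
`Int_{(i₁,…,i_s)}(t) = U_{i₁}(t) ∫₀ᵗ dt₁ ⋯ ∫₀^{t_{s-2}} dt_{s-1}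
U_{i₁}⁻¹B_{i₁,i₂}U_{i₂}(t₁) ⋯ U_{i_{s-1}}⁻¹B_{i_{s-1},i_s}U_{i_s}(t_{s-1})`,
with `Int_{(i)}(t) = U_i(t)`. -/
noncomputable def intTuple {m n : ℕ}
    (B : Fin m → Fin m → ℝ → Matrix (Fin n) (Fin n) ℂ)
    (U : Fin m → ℝ → Matrix (Fin n) (Fin n) ℂ) :
    List (Fin m) → ℝ → Matrix (Fin n) (Fin n) ℂ
  | [] => fun _ => 1
  | i :: l => fun t =>
      U i t * nestedInt
        (((i :: l).zip l).map fun p => fun τ => (U p.1 τ)⁻¹ * B p.1 p.2 τ * U p.2 τ) t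

/-!
Split the increasing tuples `s < i₁ < ⋯ < i_r < q` with `r ≥ 1` according to `i₁ = k`. The outermost
integral of `Int_{(s,k,i₂,…,q)}` peels off as `U_s ∫ U_s⁻¹ B_{s,k} Int_{(k,i₂,…,q)}`, and for fixed
`k` the remaining tuples `(k,i₂,…,q)` are exactly those summed in `C_{k,q}`; all integrands are
continuous, so the finite sum may be moved under the integral.
-/

open Finset in
theorem sum_powerset_eq_sum_insert_min {α M : Type*} [LinearOrder α] [AddCommMonoid M]
    (s : Finset α) (f : Finset α → M) :
    ∑ S ∈ s.powerset, f S = f ∅ + ∑ k ∈ s, ∑ S ∈ {x ∈ s | k < x}.powerset, f (insert k S) := by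
  induction s using Finset.induction_on_min with
  | empty => simp
  | insert a s ha ih =>
    have ha' : a ∉ s := fun h => (ha a h).false
    have above_min : {x ∈ insert a s | a < x} = s := by
      rw [filter_insert, if_neg (lt_irrefl a), filter_true_of_mem ha]
    have above_of_mem : ∀ k ∈ s, {x ∈ insert a s | k < x} = {x ∈ s | k < x} := fun k hk => by
      rw [filter_insert, if_neg (ha k hk).asymm]
    rw [sum_powerset_insert ha', ih, sum_insert ha', above_min, add_assoc,
      add_comm (∑ S ∈ s.powerset, f (insert a S))]
    congr 2
    exact sum_congr rfl fun k hk => by rw [above_of_mem k hk]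

theorem add_sum_sum_powersetCard {α M : Type*} [AddCommMonoid M] (s : Finset α)
    (f : Finset α → M) :
    f ∅ + ∑ r ∈ Finset.Icc 1 s.card, ∑ S ∈ s.powersetCard r, f S = ∑ S ∈ s.powerset, f S := by
  rw [Finset.sum_powerset, Finset.range_eq_Ico, Finset.sum_eq_sum_Ico_succ_bot (by simp),
    Finset.powersetCard_zero, Finset.sum_singleton]
  rfl

theorem sum_sum_powersetCard_Ioo {α M : Type*} [LinearOrder α] [LocallyFiniteOrder α]
    [AddCancelCommMonoid M] (p q : α) (f : Finset α → M) :
    ∑ r ∈ Finset.Icc 1 (Finset.Ioo p q).card, ∑ S ∈ (Finset.Ioo p q).powersetCard r, f S =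
      ∑ k ∈ Finset.Ioo p q, ∑ S ∈ (Finset.Ioo k q).powerset, f (insert k S) := by
  have Ioo_above : ∀ k ∈ Finset.Ioo p q, {x ∈ Finset.Ioo p q | k < x} = Finset.Ioo k q := by
    intro k hk
    ext x
    grind
  refine add_left_cancel (a := f ∅) ?_
  rw [add_sum_sum_powersetCard, sum_powerset_eq_sum_insert_min]
  exact congrArg (f ∅ + ·) (Finset.sum_congr rfl fun k hk => by rw [Ioo_above k hk])

theorem isChain_lt_cons_sort_append {α : Type*} [LinearOrder α] {p q : α} (hpq : p < q)
    {S : Finset α} (hS : ∀ x ∈ S, p < x ∧ x < q) :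
    (p :: (S.sort (· ≤ ·) ++ [q])).IsChain (· < ·) := by
  rw [List.isChain_iff_pairwise, List.pairwise_cons, List.pairwise_append]
  refine ⟨?_, S.sortedLT_sort.pairwise, List.pairwise_singleton _ _, ?_⟩
  · simpa [or_imp, forall_and, hpq] using fun x hx => (hS x hx).1
  · simpa using fun x hx => (hS x hx).2

theorem continuousOn_matrix_inv {X ι R : Type*} [TopologicalSpace X] [Fintype ι] [DecidableEq ι]
    [NormedCommRing R] [HasSummableGeomSeries R] {A : X → Matrix ι ι R} {s : Set X}
    (hA : ContinuousOn A s) (hunit : ∀ x ∈ s, IsUnit (A x)) :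
    ContinuousOn (fun x => (A x)⁻¹) s := by
  intro x hx
  obtain ⟨d, hd⟩ := (Matrix.isUnit_iff_isUnit_det _).1 (hunit x hx)
  have hdet : ContinuousAt Ring.inverse (A x).det := hd ▸ NormedRing.inverse_continuousAt d
  exact (continuousAt_matrix_inv _ hdet).comp_continuousWithinAt (hA x hx)

section NestedIntegrals

variable {m n : ℕ} {T : ℝ} {B : Fin m → Fin m → ℝ → Matrix (Fin n) (Fin n) ℂ}
  {U : Fin m → ℝ → Matrix (Fin n) (Fin n) ℂ}

variable (B U) in
theorem intTuple_cons_cons (i k : Fin m) (l : List (Fin m)) (t : ℝ) :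
    intTuple B U (i :: k :: l) t =
      U i t * ∫ τ in (0 : ℝ)..t, (U i τ)⁻¹ * B i k τ * intTuple B U (k :: l) τ := by
  simp only [intTuple, List.zip_cons_cons, List.map_cons, nestedInt, mul_assoc]

theorem continuousOn_intTuple (hU : ∀ i, ContinuousOn (U i) (uIcc 0 T))
    (hUinv : ∀ i, ∀ t ∈ uIcc 0 T, IsUnit (U i t)) {l : List (Fin m)}
    (hB : l.IsChain fun i j => ContinuousOn (B i j) (uIcc 0 T)) :
    ContinuousOn (intTuple B U l) (uIcc 0 T) := by
  induction l with
  | nil => exact continuousOn_const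
  | cons i l ih =>
    cases l with
    | nil => simpa [intTuple, nestedInt] using hU i
    | cons k l =>
      obtain ⟨hBik, hBl⟩ := List.isChain_cons_cons.1 hB
      have integrand_cont : ContinuousOn
          (fun τ => (U i τ)⁻¹ * B i k τ * intTuple B U (k :: l) τ) (uIcc 0 T) :=
        ((continuousOn_matrix_inv (hU i) (hUinv i)).mul hBik).mul (ih hBl)
      simp only [funext (intTuple_cons_cons B U i k l)]
      exact (hU i).mul (continuousOn_primitive_interval
        (integrand_cont.integrableOn_compact isCompact_uIcc))

variable (B U) in
/-- `Int_{(p,i₁,…,i_r,q)}`, with the intermediate indices `i₁ < ⋯ < i_r` recorded as the finite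
set `S = {i₁, …, i_r}`. -/
noncomputable def intVia (p q : Fin m) (S : Finset (Fin m)) : ℝ → Matrix (Fin n) (Fin n) ℂ :=
  intTuple B U (p :: (S.sort (· ≤ ·) ++ [q]))

variable (B U) in
theorem intVia_insert (p q : Fin m) {k : Fin m} {S : Finset (Fin m)}
    (hS : ∀ x ∈ S, k < x) (t : ℝ) :
    intVia B U p q (insert k S) t =
      U p t * ∫ τ in (0 : ℝ)..t, (U p τ)⁻¹ * B p k τ * intVia B U k q S τ := by
  have sort_eq : (insert k S).sort (· ≤ ·) = k :: S.sort (· ≤ ·) :=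
    Finset.sort_insert (r := (· ≤ ·)) (fun x hx => (hS x hx).le) fun hk => (hS k hk).false
  simp only [intVia, sort_eq, List.cons_append, intTuple_cons_cons]

theorem continuousOn_intVia (hB : ∀ i j, i < j → ContinuousOn (B i j) (uIcc 0 T))
    (hU : ∀ i, ContinuousOn (U i) (uIcc 0 T)) (hUinv : ∀ i, ∀ t ∈ uIcc 0 T, IsUnit (U i t))
    {p q : Fin m} (hpq : p < q) {S : Finset (Fin m)} (hS : S ⊆ Finset.Ioo p q) :
    ContinuousOn (intVia B U p q S) (uIcc 0 T) :=
  continuousOn_intTuple hU hUinv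
    ((isChain_lt_cons_sort_append hpq fun _ hx => Finset.mem_Ioo.1 (hS hx)).imp hB)

theorem sum_intVia_insert (hB : ∀ i j, i < j → ContinuousOn (B i j) (uIcc 0 T))
    (hU : ∀ i, ContinuousOn (U i) (uIcc 0 T)) (hUinv : ∀ i, ∀ t ∈ uIcc 0 T, IsUnit (U i t))
    {p k q : Fin m} (hpk : p < k) (hkq : k < q) {t : ℝ} (ht : t ∈ uIcc 0 T) :
    ∑ S ∈ (Finset.Ioo k q).powerset, intVia B U p q (insert k S) t =
      U p t * ∫ τ in (0 : ℝ)..t,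
        (U p τ)⁻¹ * B p k τ * ∑ S ∈ (Finset.Ioo k q).powerset, intVia B U k q S τ := by
  have integrand_cont : ∀ S ∈ (Finset.Ioo k q).powerset,
      ContinuousOn (fun τ => (U p τ)⁻¹ * B p k τ * intVia B U k q S τ) (uIcc 0 T) := fun S hS =>
    ((continuousOn_matrix_inv (hU p) (hUinv p)).mul (hB p k hpk)).mul
      (continuousOn_intVia hB hU hUinv hkq (Finset.mem_powerset.1 hS))
  simp only [Finset.mul_sum]
  rw [intervalIntegral.integral_finsetSum fun S hS =>
    ((integrand_cont S hS).mono (uIcc_subset_uIcc_left ht)).intervalIntegrable, Finset.mul_sum]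
  refine Finset.sum_congr rfl fun S hS => intVia_insert B U p q (fun x hx => ?_) t
  exact (Finset.mem_Ioo.1 (Finset.mem_powerset.1 hS hx)).1

variable (B U) in
theorem intTuple_add_sum_eq_sum_intVia (p q : Fin m) (t : ℝ) :
    intTuple B U [p, q] t +
        ∑ r ∈ Finset.Icc 1 ((q : ℕ) - (p : ℕ) - 1),
          ∑ S ∈ Finset.powersetCard r (Finset.Ioo p q),
            intTuple B U (p :: (S.sort (· ≤ ·) ++ [q])) t =
      ∑ S ∈ (Finset.Ioo p q).powerset, intVia B U p q S t := by
  rw [← add_sum_sum_powersetCard, Fin.card_Ioo]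
  simp only [intVia, Finset.sort_empty, List.nil_append]

theorem statement11_general {C : Fin m → Fin m → ℝ → Matrix (Fin n) (Fin n) ℂ}
    (hB : ∀ i j, i < j → ContinuousOn (B i j) (uIcc 0 T))
    (hU : ∀ i, ContinuousOn (U i) (uIcc 0 T)) (hUinv : ∀ i, ∀ t ∈ uIcc 0 T, IsUnit (U i t))
    (hC : ∀ p q, p < q → ∀ t ∈ uIcc 0 T,
      C p q t =
        intTuple B U [p, q] t +
        ∑ r ∈ Finset.Icc 1 ((q : ℕ) - (p : ℕ) - 1),
          ∑ S ∈ Finset.powersetCard r (Finset.Ioo p q),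
            intTuple B U (p :: (S.sort (· ≤ ·) ++ [q])) t)
    (s q : Fin m) {t : ℝ} (ht : t ∈ uIcc 0 T) :
    ∑ r ∈ Finset.Icc 1 ((q : ℕ) - (s : ℕ) - 1),
        ∑ S ∈ Finset.powersetCard r (Finset.Ioo s q),
          intTuple B U (s :: (S.sort (· ≤ ·) ++ [q])) t =
      ∑ k ∈ Finset.Ioo s q,
        U s t * ∫ t₁ in (0 : ℝ)..t, (U s t₁)⁻¹ * B s k t₁ * C k q t₁ := by
  have hC' : ∀ k < q, ∀ τ ∈ uIcc 0 t,
      C k q τ = ∑ S ∈ (Finset.Ioo k q).powerset, intVia B U k q S τ := fun k hk τ hτ =>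
    (hC k q hk τ (uIcc_subset_uIcc_left ht hτ)).trans (intTuple_add_sum_eq_sum_intVia B U k q τ)
  rw [← Fin.card_Ioo]
  refine (sum_sum_powersetCard_Ioo s q fun S => intVia B U s q S t).trans
    (Finset.sum_congr rfl fun k hk => ?_)
  obtain ⟨hsk, hkq⟩ := Finset.mem_Ioo.1 hk
  rw [sum_intVia_insert hB hU hUinv hsk hkq ht]
  refine congrArg (U s t * ·) (integral_congr fun τ hτ => ?_)
  simp only [hC' k hkq τ hτ]

end NestedIntegrals

/-- key identity in the proof of Theorem 1. With `U i` the (invertible)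
propagator of `B i i`, and `C p q` defined by the explicit sum over strictly increasing
tuples, for all `s < s + j ≤ m` with `j ≥ 2`:
`∑_{r=1}^{j-1} ∑_{s < i₁ < ⋯ < i_r < s+j} Int_{(s,i₁,…,i_r,s+j)}(t)
  = ∑_{i=1}^{j-1} U_s(t) ∫₀ᵗ U_s(t₁)⁻¹ B_{s,s+i}(t₁) C_{s+i,s+j}(t₁) dt₁`. -/
theorem statement11 {m n : ℕ} {T : ℝ} (hT : 0 < T)
    (B : Fin m → Fin m → ℝ → Matrix (Fin n) (Fin n) ℂ)
    (U : Fin m → ℝ → Matrix (Fin n) (Fin n) ℂ)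
    (C : Fin m → Fin m → ℝ → Matrix (Fin n) (Fin n) ℂ)
    (hB : ∀ i j : Fin m, i ≤ j → ContinuousOn (B i j) (Icc 0 T))
    (hU0 : ∀ i, U i 0 = 1)
    (hU : ∀ i, ∀ t ∈ Icc (0 : ℝ) T,
      HasDerivWithinAt (U i) (B i i t * U i t) (Icc 0 T) t)
    (hUinv : ∀ i, ∀ t ∈ Icc (0 : ℝ) T, IsUnit (U i t))
    (hC : ∀ p q : Fin m, p < q → ∀ t : ℝ,
      C p q t =
        intTuple B U [p, q] t +
        ∑ r ∈ Finset.Icc 1 ((q : ℕ) - (p : ℕ) - 1),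
          ∑ S ∈ Finset.powersetCard r (Finset.Ioo p q),
            intTuple B U (p :: (S.sort (· ≤ ·) ++ [q])) t) :
    ∀ s q : Fin m, s < q → 2 ≤ (q : ℕ) - (s : ℕ) → ∀ t ∈ Icc (0 : ℝ) T,
      ∑ r ∈ Finset.Icc 1 ((q : ℕ) - (s : ℕ) - 1),
        ∑ S ∈ Finset.powersetCard r (Finset.Ioo s q),
          intTuple B U (s :: (S.sort (· ≤ ·) ++ [q])) t =
      ∑ k ∈ Finset.Ioo s q,
        U s t * ∫ t₁ in (0 : ℝ)..t, (U s t₁)⁻¹ * B s k t₁ * C k q t₁ := by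
  intro s q _ _ t ht
  rw [← uIcc_of_le hT.le] at hB hU hUinv ht
  exact statement11_general (fun i j hij => hB i j hij.le)
    (fun i x hx => (hU i x hx).continuousWithinAt) hUinv (fun p q hpq t _ => hC p q hpq t) s q ht
end

section
/- Let G, A₁, …, A_m : [0,T] → Mₙ(ℂ) be continuous, let d₁, …, d_m ∈ ℂ, and let U be the propagator of G (U(0) = I, U'(t) = G(t)·U(t), U(t) invertible for every t). For 0 ≤ j ≤ m−1 define x_j(t) = e^{(d₁+⋯+d_j)t}·U(t)·∫₀ᵗ dt_{j+1} ∫₀^{t_{j+1}} dt_{j+2} ⋯ ∫₀^{t_{m−1}} dt_m e^{d_{j+1}t_{j+1}+⋯+d_m t_m}·Ã_{j+1}(t_{j+1}) ⋯ Ã_m(t_m), where Ã_k(s) = U(s)⁻¹·A_k(s)·U(s) (and the empty sum d₁+⋯+d_0 is 0), and define x_m(t) = e^{(d₁+⋯+d_m)t}·U(t). Then x_j(0) = 0 for 0 ≤ j ≤ m−1, x_m(0) = I, and these functions satisfy the coupled system: x_j'(t) = (G(t) + (d₁+⋯+d_j)·I)·x_j(t) + A_{j+1}(t)·x_{j+1}(t)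 for 0 ≤ j ≤ m−1, and x_m'(t) = (G(t) + (d₁+⋯+d_m)·I)·x_m(t), for all t ∈ [0,T]. -/
open MeasureTheory Set intervalIntegral

attribute [local instance] Matrix.linftyOpNormedAddCommGroup Matrix.linftyOpNormedRing
  Matrix.linftyOpNormedAlgebra

/-!
Conjugating by the propagator removes the generator: if `U' = G U` and `N' = f`, then the product
rule gives `(e^{ct} U N)' = (G + c) (e^{ct} U N) + e^{ct} U f`. Here `N` is the iterated integral
over the simplex, whose derivative is its outermost factor `e^{d_{j+1} t} U⁻¹ A_{j+1} U` times the
remaining iterated integral. Multiplying by `e^{(d₁+⋯+d_j)t} U` cancels `U⁻¹` and supplies the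
missing exponential, so the inhomogeneous term is exactly `A_{j+1} x_{j+1}`.
-/

theorem hasDerivWithinAt_integral_Icc {E : Type*} [NormedAddCommGroup E] [NormedSpace ℝ E]
    [CompleteSpace E] {f : ℝ → E} {a b c t : ℝ} (hf : ContinuousOn f (Icc a b))
    (hc : c ∈ Icc a b) (ht : t ∈ Icc a b) :
    HasDerivWithinAt (fun u => ∫ τ in c..u, f τ) (f t) (Icc a b) t := by
  have : Fact (t ∈ Icc a b) := ⟨ht⟩
  have hint : IntervalIntegrable f volume c t :=
    (hf.mono (ordConnected_Icc.uIcc_subset hc ht)).intervalIntegrable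
  exact integral_hasDerivWithinAt_right hint
    (hf.stronglyMeasurableAtFilter_nhdsWithin measurableSet_Icc t) (hf t ht)

theorem continuousOn_ringInverse_s13 {R X : Type*} [NormedRing R] [HasSummableGeomSeries R]
    [TopologicalSpace X] {f : X → R} {s : Set X} (hf : ContinuousOn f s)
    (hunit : ∀ x ∈ s, IsUnit (f x)) : ContinuousOn (fun x => Ring.inverse (f x)) s := by
  intro x hx
  obtain ⟨u, hu⟩ := hunit x hx
  have hinv : ContinuousAt Ring.inverse (f x) := hu ▸ NormedRing.inverse_continuousAt u
  exact hinv.comp_continuousWithinAt (hf x hx)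

theorem hasDerivWithinAt_cexp_smul {E : Type*} [NormedAddCommGroup E] [NormedSpace ℂ E]
    (c : ℂ) {F : ℝ → E} {F' : E} {s : Set ℝ} {t : ℝ} (hF : HasDerivWithinAt F F' s t) :
    HasDerivWithinAt (fun τ : ℝ => Complex.exp (c * τ) • F τ)
      (c • Complex.exp (c * t) • F t + Complex.exp (c * t) • F') s t := by
  have hexp : HasDerivWithinAt (fun τ : ℝ => Complex.exp (c * τ))
      (Complex.exp (c * t) * c) s t := by
    simpa only [Complex.ofRealCLM_apply, Complex.ofReal_one, mul_one] using
      (Complex.ofRealCLM.hasDerivWithinAt.const_mul c).cexp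
  refine (hexp.smul hF).congr_deriv ?_
  rw [mul_comm _ c, mul_smul, add_comm]

section SimplexIntegral

variable {𝔸 : Type*} [NormedRing 𝔸] [NormedAlgebra ℝ 𝔸]

/-- The iterated integral `∫_c^t dt₁ M₁(t₁) ∫_c^{t₁} dt₂ M₂(t₂) ⋯ ∫_c^{t_{k-1}} dt_k M_k(t_k)` of
`[M₁, …, M_k]` in a normed algebra, which extends `nestedInt` to arbitrary coefficients and base
points. -/
noncomputable def simplexIntegral (c : ℝ) : List (ℝ → 𝔸) → ℝ → 𝔸
  | [] => fun _ => 1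
  | M :: Ms => fun t => ∫ τ in c..t, M τ * simplexIntegral c Ms τ

theorem nestedInt_eq_simplexIntegral {n : ℕ} (L : List (ℝ → Matrix (Fin n) (Fin n) ℂ)) :
    nestedInt L = simplexIntegral 0 L := by
  induction L with
  | nil => rfl
  | cons M Ms ih => simp only [nestedInt, simplexIntegral, ih]

variable [CompleteSpace 𝔸] {a b c : ℝ}

theorem continuousOn_simplexIntegral (hc : c ∈ Icc a b) {L : List (ℝ → 𝔸)}
    (hL : ∀ M ∈ L, ContinuousOn M (Icc a b)) : ContinuousOn (simplexIntegral c L) (Icc a b) := by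
  induction L with
  | nil => exact continuousOn_const
  | cons M Ms ih =>
    obtain ⟨hM, hMs⟩ := List.forall_mem_cons.1 hL
    exact fun t ht =>
      (hasDerivWithinAt_integral_Icc (hM.mul (ih hMs)) hc ht).continuousWithinAt

theorem hasDerivWithinAt_simplexIntegral_cons (hc : c ∈ Icc a b) {M : ℝ → 𝔸}
    {Ms : List (ℝ → 𝔸)} (hL : ∀ N ∈ M :: Ms, ContinuousOn N (Icc a b)) {t : ℝ}
    (ht : t ∈ Icc a b) :
    HasDerivWithinAt (simplexIntegral c (M :: Ms)) (M t * simplexIntegral c Ms t) (Icc a b) t := by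
  obtain ⟨hM, hMs⟩ := List.forall_mem_cons.1 hL
  exact hasDerivWithinAt_integral_Icc (hM.mul (continuousOn_simplexIntegral hc hMs)) hc ht

end SimplexIntegral

section CoupledSystem

variable {𝔸 : Type*} [NormedRing 𝔸] [NormedAlgebra ℂ 𝔸]

theorem hasDerivWithinAt_cexp_smul_mul (c : ℂ) {U N : ℝ → 𝔸} {g f : 𝔸} {s : Set ℝ} {t : ℝ}
    (hU : HasDerivWithinAt U (g * U t) s t) (hN : HasDerivWithinAt N f s t) :
    HasDerivWithinAt (fun τ : ℝ => Complex.exp (c * τ) • (U τ * N τ))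
      ((g + c • (1 : 𝔸)) * (Complex.exp (c * t) • (U t * N t)) + Complex.exp (c * t) • (U t * f))
      s t := by
  refine (hasDerivWithinAt_cexp_smul c (hU.mul hN)).congr_deriv ?_
  simp only [Pi.mul_apply, add_mul, smul_add, smul_mul_assoc, mul_smul_comm, one_mul, mul_assoc,
    smul_comm c]
  abel

/-- The operator `A` in the interaction picture of the propagator `U`, weighted by the exponential
`e^{cτ}`: the integrand `e^{cτ} U(τ)⁻¹ A(τ) U(τ)`. -/
noncomputable def weightedInteraction (U : ℝ → 𝔸) (c : ℂ) (A : ℝ → 𝔸) (τ : ℝ) : 𝔸 :=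
  Complex.exp (c * τ) • (Ring.inverse (U τ) * A τ * U τ)

theorem continuousOn_weightedInteraction [CompleteSpace 𝔸] {U A : ℝ → 𝔸} {s : Set ℝ}
    (hU : ContinuousOn U s) (hunit : ∀ t ∈ s, IsUnit (U t)) (c : ℂ) (hA : ContinuousOn A s) :
    ContinuousOn (weightedInteraction U c A) s := by
  have hexp : ContinuousOn (fun τ : ℝ => Complex.exp (c * τ)) s := by fun_prop
  exact hexp.smul (((continuousOn_ringInverse_s13 hU hunit).mul hA).mul hU)

theorem mul_weightedInteraction_mul {U : ℝ → 𝔸} {t : ℝ} (hunit : IsUnit (U t)) (c : ℂ)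
    (A : ℝ → 𝔸) (N : 𝔸) :
    U t * (weightedInteraction U c A t * N) = Complex.exp (c * t) • (A t * (U t * N)) := by
  simp only [weightedInteraction, smul_mul_assoc, mul_smul_comm, mul_assoc,
    Ring.mul_inverse_cancel_left _ _ hunit]

/-- The integrands `e^{d_k τ} Ã_k(τ)` for `j < k ≤ m`, in this order, where `Ã_k = U⁻¹ A_k U`. -/
noncomputable def interactionTail (U : ℝ → 𝔸) (A : ℕ → ℝ → 𝔸) (d : ℕ → ℂ) (m j : ℕ) :
    List (ℝ → 𝔸) :=
  (List.range' (j + 1) (m - j)).map fun k => weightedInteraction U (d k) (A k)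

/-- The function `x_j` of the coupled system: the iterated integral of `e^{d_k τ} Ã_k(τ)`,
`j < k ≤ m`, transported by `e^{(d₁+⋯+d_j)t} U(t)`. -/
noncomputable def coupledSolution (U : ℝ → 𝔸) (A : ℕ → ℝ → 𝔸) (d : ℕ → ℂ) (m j : ℕ) (t : ℝ) : 𝔸 :=
  Complex.exp ((∑ k ∈ Finset.Icc 1 j, d k) * t) •
    (U t * simplexIntegral 0 (interactionTail U A d m j) t)

variable {U : ℝ → 𝔸} {A : ℕ → ℝ → 𝔸} {d : ℕ → ℂ} {m j : ℕ}

theorem interactionTail_self : interactionTail U A d m m = [] := by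
  simp [interactionTail]

theorem interactionTail_of_lt (hj : j < m) :
    interactionTail U A d m j =
      weightedInteraction U (d (j + 1)) (A (j + 1)) :: interactionTail U A d m (j + 1) := by
  have hlen : m - j = m - (j + 1) + 1 := by omega
  rw [interactionTail, hlen, List.range'_succ, List.map_cons, interactionTail]

theorem coupledSolution_zero_of_lt (hj : j < m) : coupledSolution U A d m j 0 = 0 := by
  simp [coupledSolution, interactionTail_of_lt hj, simplexIntegral]

theorem coupledSolution_self_zero : coupledSolution U A d m m 0 = U 0 := by
  simp [coupledSolution, interactionTail_self, simplexIntegral]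

theorem hasDerivWithinAt_coupledSolution_self {g : 𝔸} {s : Set ℝ} {t : ℝ}
    (hU : HasDerivWithinAt U (g * U t) s t) :
    HasDerivWithinAt (coupledSolution U A d m m)
      ((g + (∑ k ∈ Finset.Icc 1 m, d k) • (1 : 𝔸)) * coupledSolution U A d m m t) s t := by
  have hN : HasDerivWithinAt (simplexIntegral 0 (interactionTail U A d m m)) 0 s t := by
    rw [interactionTail_self]
    exact hasDerivWithinAt_const t s 1
  refine (hasDerivWithinAt_cexp_smul_mul (∑ k ∈ Finset.Icc 1 m, d k) hU hN).congr_deriv ?_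
  rw [mul_zero, smul_zero, add_zero, coupledSolution]

theorem cexp_smul_mul_weightedInteraction_mul {t : ℝ} (hunit : IsUnit (U t)) :
    Complex.exp ((∑ k ∈ Finset.Icc 1 j, d k) * t) •
        (U t * (weightedInteraction U (d (j + 1)) (A (j + 1)) t *
          simplexIntegral 0 (interactionTail U A d m (j + 1)) t)) =
      A (j + 1) t * coupledSolution U A d m (j + 1) t := by
  rw [mul_weightedInteraction_mul hunit, smul_smul, ← Complex.exp_add, ← add_mul,
    ← Finset.sum_Icc_succ_top (Nat.le_add_left 1 j), coupledSolution, mul_smul_comm]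

variable [CompleteSpace 𝔸] {a b : ℝ}

theorem continuousOn_of_mem_interactionTail (hU : ContinuousOn U (Icc a b))
    (hunit : ∀ t ∈ Icc a b, IsUnit (U t))
    (hA : ∀ k, j < k → k ≤ m → ContinuousOn (A k) (Icc a b)) {M : ℝ → 𝔸}
    (hM : M ∈ interactionTail U A d m j) : ContinuousOn M (Icc a b) := by
  obtain ⟨k, hk, rfl⟩ := List.mem_map.1 hM
  rw [List.mem_range'_1] at hk
  exact continuousOn_weightedInteraction hU hunit (d k) (hA k (by omega) (by omega))

theorem hasDerivWithinAt_coupledSolution_of_lt (h0 : 0 ∈ Icc a b) (hj : j < m)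
    (hU : ContinuousOn U (Icc a b)) (hunit : ∀ t ∈ Icc a b, IsUnit (U t))
    (hA : ∀ k, j < k → k ≤ m → ContinuousOn (A k) (Icc a b)) {g : 𝔸} {t : ℝ}
    (ht : t ∈ Icc a b) (hUt : HasDerivWithinAt U (g * U t) (Icc a b) t) :
    HasDerivWithinAt (coupledSolution U A d m j)
      ((g + (∑ k ∈ Finset.Icc 1 j, d k) • (1 : 𝔸)) * coupledSolution U A d m j t
        + A (j + 1) t * coupledSolution U A d m (j + 1) t) (Icc a b) t := by
  have hcont : ∀ M ∈ interactionTail U A d m j, ContinuousOn M (Icc a b) :=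
    fun M hM => continuousOn_of_mem_interactionTail hU hunit hA hM
  have hN : HasDerivWithinAt (simplexIntegral 0 (interactionTail U A d m j))
      (weightedInteraction U (d (j + 1)) (A (j + 1)) t *
        simplexIntegral 0 (interactionTail U A d m (j + 1)) t) (Icc a b) t := by
    rw [interactionTail_of_lt hj] at hcont ⊢
    exact hasDerivWithinAt_simplexIntegral_cons h0 hcont ht
  refine (hasDerivWithinAt_cexp_smul_mul (∑ k ∈ Finset.Icc 1 j, d k) hUt hN).congr_deriv ?_
  rw [cexp_smul_mul_weightedInteraction_mul (hunit t ht)]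
  rfl

theorem statement13_general (h0 : 0 ∈ Icc a b) {G : ℝ → 𝔸}
    (hA : ∀ k, 1 ≤ k → k ≤ m → ContinuousOn (A k) (Icc a b)) (hU0 : U 0 = 1)
    (hU : ∀ t ∈ Icc a b, HasDerivWithinAt U (G t * U t) (Icc a b) t)
    (hUinv : ∀ t ∈ Icc a b, IsUnit (U t))
    {x : ℕ → ℝ → 𝔸} (hx : ∀ j ≤ m, x j = coupledSolution U A d m j) :
    (∀ j < m, x j 0 = 0) ∧
    x m 0 = 1 ∧
    (∀ j < m, ∀ t ∈ Icc a b,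
      HasDerivWithinAt (x j)
        ((G t + (∑ k ∈ Finset.Icc 1 j, d k) • (1 : 𝔸)) * x j t + A (j + 1) t * x (j + 1) t)
        (Icc a b) t) ∧
    (∀ t ∈ Icc a b,
      HasDerivWithinAt (x m) ((G t + (∑ k ∈ Finset.Icc 1 m, d k) • (1 : 𝔸)) * x m t)
        (Icc a b) t) := by
  have hUcont : ContinuousOn U (Icc a b) := fun t ht => (hU t ht).continuousWithinAt
  refine ⟨fun j hj => ?_, ?_, fun j hj t ht => ?_, fun t ht => ?_⟩
  · rw [hx j hj.le, coupledSolution_zero_of_lt hj]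
  · rw [hx m le_rfl, coupledSolution_self_zero, hU0]
  · rw [hx j hj.le, hx (j + 1) hj]
    exact hasDerivWithinAt_coupledSolution_of_lt h0 hj hUcont hUinv
      (fun k hk => hA k (by omega)) ht (hU t ht)
  · rw [hx m le_rfl]
    exact hasDerivWithinAt_coupledSolution_self (hU t ht)

end CoupledSystem

/-- products of exponentials. Let `U` be the propagator of `G` and, for
`0 ≤ j ≤ m` (with `A` and `d` indexed `1, …, m`), let
`x j t = e^{(d₁+⋯+d_j)t} U(t) ∫₀ᵗ dt_{j+1} ⋯ ∫₀^{t_{m-1}} dt_m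
  e^{d_{j+1}t_{j+1}+⋯+d_m t_m} Ã_{j+1}(t_{j+1}) ⋯ Ã_m(t_m)`,
where `Ã_k s = (U s)⁻¹ A_k(s) U(s)`; in particular `x m t = e^{(d₁+⋯+d_m)t} U(t)`.
Then `x j 0 = 0` for `j < m`, `x m 0 = 1`, and the `x j` satisfy the coupled system
`x_j' = (G + (d₁+⋯+d_j)·I) x_j + A_{j+1} x_{j+1}` for `j < m` and
`x_m' = (G + (d₁+⋯+d_m)·I) x_m`. -/
theorem statement13 {n m : ℕ} {T : ℝ} (hT : 0 < T)
    (G : ℝ → Matrix (Fin n) (Fin n) ℂ) (A : ℕ → ℝ → Matrix (Fin n) (Fin n) ℂ)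
    (d : ℕ → ℂ) (U : ℝ → Matrix (Fin n) (Fin n) ℂ)
    (hG : ContinuousOn G (Icc 0 T))
    (hA : ∀ k, 1 ≤ k → k ≤ m → ContinuousOn (A k) (Icc 0 T))
    (hU0 : U 0 = 1)
    (hU : ∀ t ∈ Icc (0 : ℝ) T, HasDerivWithinAt U (G t * U t) (Icc 0 T) t)
    (hUinv : ∀ t ∈ Icc (0 : ℝ) T, IsUnit (U t))
    (x : ℕ → ℝ → Matrix (Fin n) (Fin n) ℂ)
    (hx : ∀ j ≤ m, x j = fun (t : ℝ) =>
      Complex.exp ((∑ k ∈ Finset.Icc 1 j, d k) * (t : ℂ)) •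
        (U t * nestedInt
          ((List.range' (j + 1) (m - j)).map
            fun k => fun (τ : ℝ) => Complex.exp (d k * (τ : ℂ)) • ((U τ)⁻¹ * A k τ * U τ)) t)) :
    (∀ j < m, x j 0 = 0) ∧
    x m 0 = 1 ∧
    (∀ j < m, ∀ t ∈ Icc (0 : ℝ) T,
      HasDerivWithinAt (x j)
        ((G t + (∑ k ∈ Finset.Icc 1 j, d k) • (1 : Matrix (Fin n) (Fin n) ℂ)) * x j t
          + A (j + 1) t * x (j + 1) t)
        (Icc 0 T) t) ∧
    (∀ t ∈ Icc (0 : ℝ) T,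
      HasDerivWithinAt (x m)
        ((G t + (∑ k ∈ Finset.Icc 1 m, d k) • (1 : Matrix (Fin n) (Fin n) ℂ)) * x m t)
        (Icc 0 T) t) :=
  statement13_general (left_mem_Icc.2 hT.le) hA hU0 hU hUinv fun j hj => by
    simp only [hx j hj, nestedInt_eq_simplexIntegral, Matrix.nonsing_inv_eq_ringInverse]
    rfl
end
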